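/- Let B be the open unit ball in ℝ⁴ centered at the origin and let R ≥ 1. Then for every radial function u ∈ C₀^∞(B \ {0}) one has ∫_B (Δu)² dx − ∫_B u(x)² / ( |x|⁴ · E₁(|x|/R)² ) dx ≥ ∫_B u(x)² / ( |x|⁴ · E₁(|x|/R)² · E₂(|x|/R)² ) dx. -/

import Mathlib

/-!
Write `u x = g ‖x‖` and put `w(s) = g(e^{-s})`. In dimension four `Δu = r⁻² (w'' - 2 w')`, so up to
the area of the unit sphere `∫ (Δu)² = ∫ (w'' - 2 w')² ds = ∫ (w''² + 4 w'²) ds`, the cross term being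
an exact derivative. With `T = E₁(e^{-s} / R)` and `L = E₂(e^{-s} / R)` one has `T' = 1` and
`L' = 1 / T`, and the claim follows from the one-dimensional Hardy inequality with remainder
`4 ∫ w'² ≥ ∫ w² (T⁻² + T⁻² L⁻²) ds`. That one comes from the ground state `ψ = √(T L)`: with
`φ = ψ' / ψ`, the inequality `0 ≤ ∫ (w' - φ w)²` gives `∫ w'² ≥ ∫ (-φ' - φ²) w²`, and
`-φ' - φ² = (T⁻² + T⁻² L⁻²) / 4`.

In `radial_ineq` all of this is one pointwise identity in the variable `r`: the difference of the
integrands is a sum of squares plus an exact derivative. `lap_radial` computes the Laplacian of a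
radial function and `setIntegral_ball_radial` passes to polar coordinates.
-/

open MeasureTheory Real

/-- `E₁(t) = 1 - ln t`. -/
noncomputable def E1 (t : ℝ) : ℝ := 1 - Real.log t

/-- `E₂(t) = ln (e E₁(t)) = 1 + ln E₁(t)`. -/
noncomputable def E2 (t : ℝ) : ℝ := 1 + Real.log (E1 t)

/-- The Euclidean Laplacian of a scalar function on `ℝⁿ`. -/
noncomputable def lap {n : ℕ} (f : EuclideanSpace ℝ (Fin n) → ℝ) :
    EuclideanSpace ℝ (Fin n) → ℝ := fun x =>
  ∑ i, fderiv ℝ (fun y => fderiv ℝ f y (EuclideanSpace.single i 1)) x (EuclideanSpace.single i 1)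

lemma hasDerivAt_E1 {R r : ℝ} (hR : 1 ≤ R) (hr : 0 < r) :
    HasDerivAt (fun r => E1 (r / R)) (-r⁻¹) r := by
  have hR0 : R ≠ 0 := by positivity
  have h := (((hasDerivAt_id r).div_const R).log
    (by simp only [id]; positivity)).const_sub 1
  refine h.congr_deriv ?_
  simp only [id]
  field_simp

lemma one_le_E1 {R r : ℝ} (hR : 1 ≤ R) (hr : 0 < r) (hr1 : r ≤ 1) : 1 ≤ E1 (r / R) := by
  have : Real.log (r / R) ≤ 0 :=
    Real.log_nonpos (by positivity) ((div_le_one (by positivity)).2 (hr1.trans hR))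
  unfold E1; linarith

lemma one_le_E2 {R r : ℝ} (hR : 1 ≤ R) (hr : 0 < r) (hr1 : r ≤ 1) : 1 ≤ E2 (r / R) := by
  have := Real.log_nonneg (one_le_E1 hR hr hr1)
  unfold E2; linarith

lemma hasDerivAt_E2 {R r : ℝ} (hR : 1 ≤ R) (hr : 0 < r) (hr1 : r ≤ 1) :
    HasDerivAt (fun r => E2 (r / R)) (-r⁻¹ / E1 (r / R)) r :=
  ((hasDerivAt_E1 hR hr).log (by linarith [one_le_E1 hR hr hr1])).const_add 1

/-- The radial form of the theorem, for a profile `g` on `[a, b] ⊆ (0, 1]` that vanishes together with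
`g'` at both endpoints; `g1` and `g2` are the first two derivatives of `g`. -/
lemma radial_ineq {R a b : ℝ} (hR : 1 ≤ R) (ha : 0 < a) (hab : a ≤ b) (hb : b ≤ 1)
    {g g1 g2 : ℝ → ℝ} (hg : ∀ r, HasDerivAt g (g1 r) r) (hg1 : ∀ r, HasDerivAt g1 (g2 r) r)
    (hg2 : Continuous g2) (hga : g a = 0) (hgb : g b = 0) (hga1 : g1 a = 0) (hgb1 : g1 b = 0) :
    (∫ r in a..b, r ^ 3 * (g r ^ 2 / (r ^ 4 * E1 (r / R) ^ 2 * E2 (r / R) ^ 2))) ≤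
      (∫ r in a..b, r ^ 3 * (g2 r + 3 / r * g1 r) ^ 2) -
        ∫ r in a..b, r ^ 3 * (g r ^ 2 / (r ^ 4 * E1 (r / R) ^ 2)) := by
  set T : ℝ → ℝ := fun r => E1 (r / R) with hT
  set L : ℝ → ℝ := fun r => E2 (r / R) with hL
  change (∫ r in a..b, r ^ 3 * (g r ^ 2 / (r ^ 4 * T r ^ 2 * L r ^ 2))) ≤
      (∫ r in a..b, r ^ 3 * (g2 r + 3 / r * g1 r) ^ 2) -
        ∫ r in a..b, r ^ 3 * (g r ^ 2 / (r ^ 4 * T r ^ 2))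
  have hpos : ∀ r ∈ Set.uIcc a b, 0 < r ∧ r ≤ 1 := by
    rw [Set.uIcc_of_le hab]; rintro r ⟨h1, h2⟩; constructor <;> linarith
  have hT1 : ∀ r ∈ Set.uIcc a b, 1 ≤ T r := fun r hr => one_le_E1 hR (hpos r hr).1 (hpos r hr).2
  have hL1 : ∀ r ∈ Set.uIcc a b, 1 ≤ L r := fun r hr => one_le_E2 hR (hpos r hr).1 (hpos r hr).2
  have hTd : ∀ r ∈ Set.uIcc a b, HasDerivAt T (-r⁻¹) r :=
    fun r hr => hasDerivAt_E1 hR (hpos r hr).1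
  have hLd : ∀ r ∈ Set.uIcc a b, HasDerivAt L (-r⁻¹ / T r) r :=
    fun r hr => hasDerivAt_E2 hR (hpos r hr).1 (hpos r hr).2
  have hTc : ContinuousOn T (Set.uIcc a b) :=
    fun r hr => (hTd r hr).continuousAt.continuousWithinAt
  have hLc : ContinuousOn L (Set.uIcc a b) :=
    fun r hr => (hLd r hr).continuousAt.continuousWithinAt
  have hgc : Continuous g := continuous_iff_continuousAt.2 fun r => (hg r).continuousAt
  have hg1c : Continuous g1 := continuous_iff_continuousAt.2 fun r => (hg1 r).continuousAt
  have hgc' := hgc.continuousOn (s := Set.uIcc a b)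
  have hg1c' := hg1c.continuousOn (s := Set.uIcc a b)
  have hg2c' := hg2.continuousOn (s := Set.uIcc a b)
  have n0 : ∀ r ∈ Set.uIcc a b, r ≠ 0 := fun r hr => (hpos r hr).1.ne'
  have nT : ∀ r ∈ Set.uIcc a b, T r ≠ 0 := fun r hr => by linarith [hT1 r hr]
  have nL : ∀ r ∈ Set.uIcc a b, L r ≠ 0 := fun r hr => by linarith [hL1 r hr]
  have iA : IntervalIntegrable (fun r => r ^ 3 * (g r ^ 2 / (r ^ 4 * T r ^ 2 * L r ^ 2)))
      volume a b := by
    apply ContinuousOn.intervalIntegrable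
    refine (continuousOn_id.pow 3).mul ((hgc'.pow 2).div
      (((continuousOn_id.pow 4).mul (hTc.pow 2)).mul (hLc.pow 2)) fun r hr => ?_)
    have := n0 r hr; have := nT r hr; have := nL r hr
    positivity
  have iC : IntervalIntegrable (fun r => r ^ 3 * (g r ^ 2 / (r ^ 4 * T r ^ 2)))
      volume a b := by
    apply ContinuousOn.intervalIntegrable
    refine (continuousOn_id.pow 3).mul ((hgc'.pow 2).div
      ((continuousOn_id.pow 4).mul (hTc.pow 2)) fun r hr => ?_)
    have := n0 r hr; have := nT r hr
    positivity
  have iB : IntervalIntegrable (fun r => r ^ 3 * (g2 r + 3 / r * g1 r) ^ 2) volume a b := by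
    apply ContinuousOn.intervalIntegrable
    exact (continuousOn_id.pow 3).mul
      ((hg2c'.add ((continuousOn_const.div continuousOn_id n0).mul hg1c')).pow 2)
  -- `φ = ψ' / ψ` for the ground state `ψ = √(T L)`, differentiated in `s = -log r`
  let φ : ℝ → ℝ := fun r => (T r)⁻¹ / 2 + (T r * L r)⁻¹ / 2
  -- `φ'` is the derivative of `φ` in `r`
  let φ' : ℝ → ℝ := fun r => r⁻¹ * ((T r ^ 2)⁻¹ / 2 + (T r ^ 2 * L r)⁻¹ / 2
    + (T r ^ 2 * L r ^ 2)⁻¹ / 2)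
  have hφ : ∀ r ∈ Set.uIcc a b, HasDerivAt φ (φ' r) r := by
    intro r hr
    have := n0 r hr; have := nT r hr; have := nL r hr
    have h := (((hTd r hr).fun_inv (nT r hr)).div_const 2).fun_add
      ((((hTd r hr).fun_mul (hLd r hr)).fun_inv (mul_ne_zero (nT r hr) (nL r hr))).div_const 2)
    refine h.congr_deriv ?_
    simp only [φ']
    field_simp
    ring
  -- `F` vanishes at both endpoints; `F'` collects the cross terms of both squares
  let F : ℝ → ℝ := fun r => 2 * (r * g1 r) ^ 2 - 4 * (φ r * g r ^ 2)
  let F' : ℝ → ℝ := fun r => 4 * (r * g1 r) * (g1 r + r * g2 r)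
    - 4 * (φ' r * g r ^ 2 + φ r * (2 * g r * g1 r))
  have hF : ∀ r ∈ Set.uIcc a b, HasDerivAt F (F' r) r := by
    intro r hr
    have h := ((((hasDerivAt_id r).fun_mul (hg1 r)).fun_pow 2).const_mul 2).fun_sub
      (((hφ r hr).fun_mul ((hg r).fun_pow 2)).const_mul 4)
    refine h.congr_deriv ?_
    simp only [F', id]
    push_cast
    ring
  have cφ : ContinuousOn φ (Set.uIcc a b) :=
    fun r hr => (hφ r hr).continuousAt.continuousWithinAt
  have cφ' : ContinuousOn φ' (Set.uIcc a b) := by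
    refine (continuousOn_id.inv₀ n0).mul (((((hTc.pow 2).inv₀ ?_).div_const 2).add
      ((((hTc.pow 2).mul hLc).inv₀ ?_).div_const 2)).add
      ((((hTc.pow 2).mul (hLc.pow 2)).inv₀ ?_).div_const 2))
    all_goals
      intro r hr
      have := nT r hr; have := nL r hr
      simp only [Pi.pow_apply, Pi.mul_apply]
      positivity
  have iF : IntervalIntegrable F' volume a b := by
    apply ContinuousOn.intervalIntegrable
    fun_prop
  have hFint : ∫ r in a..b, F' r = 0 := by
    rw [intervalIntegral.integral_eq_sub_of_hasDerivAt hF iF]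
    simp [F, hga, hgb, hga1, hgb1]
  have key : 0 ≤ ∫ r in a..b, (r ^ 3 * (g2 r + 3 / r * g1 r) ^ 2
      - r ^ 3 * (g r ^ 2 / (r ^ 4 * T r ^ 2))
      - r ^ 3 * (g r ^ 2 / (r ^ 4 * T r ^ 2 * L r ^ 2)) - F' r) := by
    apply intervalIntegral.integral_nonneg hab
    intro r hr
    rw [← Set.uIcc_of_le hab] at hr
    have h0 := (hpos r hr).1
    have := nT r hr; have := nL r hr
    have e : r ^ 3 * (g2 r + 3 / r * g1 r) ^ 2
      - r ^ 3 * (g r ^ 2 / (r ^ 4 * T r ^ 2))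
      - r ^ 3 * (g r ^ 2 / (r ^ 4 * T r ^ 2 * L r ^ 2)) - F' r
      = r⁻¹ * (r ^ 2 * g2 r + r * g1 r) ^ 2 + 4 * r⁻¹ * (r * g1 r + φ r * g r) ^ 2 := by
      simp only [F', φ', φ]
      field_simp
      ring
    rw [e]; positivity
  rw [intervalIntegral.integral_sub ((iB.sub iC).sub iA) iF,
    intervalIntegral.integral_sub (iB.sub iC) iA, intervalIntegral.integral_sub iB iC, hFint] at key
  linarith

lemma hasFDerivAt_norm_inner {E : Type*} [NormedAddCommGroup E] [InnerProductSpace ℝ E]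
    {x : E} (hx : x ≠ 0) :
    HasFDerivAt (fun y : E => ‖y‖) (‖x‖⁻¹ • innerSL ℝ x) x := by
  have h := (hasStrictFDerivAt_norm_sq x).hasFDerivAt.sqrt (pow_ne_zero 2 (norm_ne_zero_iff.2 hx))
  simp only [Real.sqrt_sq (norm_nonneg _)] at h
  convert h using 1
  ext y
  simp
  field_simp

/-- Away from the origin, the Laplacian of `g(‖x‖)` is `g'' + (n - 1) / r * g'`. -/
lemma lap_radial {n : ℕ} {u : EuclideanSpace ℝ (Fin n) → ℝ} {g g1 g2 : ℝ → ℝ}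
    (hu : ∀ x, u x = g ‖x‖)
    (hg : ∀ r, HasDerivAt g (g1 r) r) (hg1 : ∀ r, HasDerivAt g1 (g2 r) r)
    {x : EuclideanSpace ℝ (Fin n)} (hx : x ≠ 0) :
    lap u x = g2 ‖x‖ + (n - 1) / ‖x‖ * g1 ‖x‖ := by
  have hu' : u = fun x => g ‖x‖ := funext hu
  have hxn : ‖x‖ ≠ 0 := norm_ne_zero_iff.2 hx
  have first : ∀ i, (fun y => fderiv ℝ u y (EuclideanSpace.single i 1)) =ᶠ[nhds x]
      fun y => g1 ‖y‖ * (‖y‖⁻¹ * y i) := by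
    intro i
    filter_upwards [isOpen_ne.mem_nhds hx] with y hy
    have h := (hg ‖y‖).comp_hasFDerivAt y (hasFDerivAt_norm_inner hy)
    rw [hu']
    have h' : fderiv ℝ (fun x => g ‖x‖) y = _ := h.fderiv
    rw [h']
    simp [EuclideanSpace.inner_single_right]
  have second : ∀ i, fderiv ℝ (fun y => fderiv ℝ u y (EuclideanSpace.single i 1)) x
      (EuclideanSpace.single i 1) =
      (g2 ‖x‖ / ‖x‖ ^ 2 - g1 ‖x‖ / ‖x‖ ^ 3) * x i ^ 2 + g1 ‖x‖ / ‖x‖ := by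
    intro i
    rw [(first i).fderiv_eq]
    have hN := hasFDerivAt_norm_inner hx
    have h1 := (hg1 ‖x‖).comp_hasFDerivAt x hN
    have h2 := (hasDerivAt_inv hxn).comp_hasFDerivAt x hN
    have h3 : HasFDerivAt (fun y : EuclideanSpace ℝ (Fin n) => y i)
      (EuclideanSpace.proj i : EuclideanSpace ℝ (Fin n) →L[ℝ] ℝ) x :=
      (EuclideanSpace.proj i : EuclideanSpace ℝ (Fin n) →L[ℝ] ℝ).hasFDerivAt
    have h : fderiv ℝ (fun y : EuclideanSpace ℝ (Fin n) => g1 ‖y‖ * (‖y‖⁻¹ * y i)) x = _ :=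
      (h1.mul (h2.mul h3)).fderiv
    rw [h]
    simp [EuclideanSpace.inner_single_right]
    field_simp
    ring
  unfold lap
  simp_rw [second]
  rw [Finset.sum_add_distrib, ← Finset.mul_sum, ← EuclideanSpace.real_norm_sq_eq]
  simp
  field_simp
  ring

/-- Polar coordinates in `ℝ⁴` for a radial function supported in an annulus; the sphere `S³` has area
`4 * volume (ball 0 1)`. -/
lemma setIntegral_ball_radial {a b : ℝ} (ha : 0 < a) (hab : a ≤ b) (hb : b < 1)
    {F : EuclideanSpace ℝ (Fin 4) → ℝ} {f : ℝ → ℝ} (hF : ∀ x, F x = f ‖x‖)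
    (hf : ∀ r, 0 ≤ r → r ∉ Set.Ioo a b → f r = 0) :
    ∫ x in Metric.ball (0 : EuclideanSpace ℝ (Fin 4)) 1, F x =
      4 * volume.real (Metric.ball (0 : EuclideanSpace ℝ (Fin 4)) 1) *
        ∫ r in a..b, r ^ 3 * f r := by
  rw [setIntegral_eq_integral_of_forall_compl_eq_zero]
  · simp_rw [hF]
    rw [integral_fun_norm_addHaar volume f, finrank_euclideanSpace_fin,
      intervalIntegral.integral_of_le hab,
      setIntegral_eq_of_subset_of_forall_sdiff_eq_zero (s := Set.Ioc a b) (t := Set.Ioi 0)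
        measurableSet_Ioi (fun r hr => ha.trans hr.1)]
    · simp [mul_assoc]
    · rintro r ⟨hr, hr'⟩
      rw [hf r (le_of_lt hr) fun h => hr' ⟨h.1, h.2.le⟩, smul_zero]
  · intro x hx
    rw [hF, hf _ (norm_nonneg x)]
    rintro ⟨-, h⟩
    exact hx (by simpa using h.trans hb)

/-- A compact subset of the punctured unit ball lies in an open annulus whose closure still avoids the
origin and the unit sphere, so that functions supported in it vanish near both boundary spheres. -/
lemma exists_annulus {E : Type*} [NormedAddCommGroup E] {K : Set E} (hK : IsCompact K)
    (hsub : K ⊆ Metric.ball 0 1 \ {0}) :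
    ∃ a b : ℝ, 0 < a ∧ a ≤ b ∧ b < 1 ∧ ∀ x ∈ K, ‖x‖ ∈ Set.Ioo a b := by
  rcases K.eq_empty_or_nonempty with rfl | hne
  · exact ⟨1 / 2, 1 / 2, by norm_num, le_rfl, by norm_num, by simp⟩
  obtain ⟨p, hp, hpm⟩ := hK.exists_isMinOn hne continuous_norm.continuousOn
  obtain ⟨q, hq, hqm⟩ := hK.exists_isMaxOn hne continuous_norm.continuousOn
  have hp0 : 0 < ‖p‖ := norm_pos_iff.2 (hsub hp).2
  have hq1 : ‖q‖ < 1 := by simpa using (hsub hq).1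
  have hpq : ‖p‖ ≤ ‖q‖ := hpm hq
  refine ⟨‖p‖ / 2, (‖q‖ + 1) / 2, by linarith, by linarith, by linarith, fun x hx => ?_⟩
  have h1 : ‖p‖ ≤ ‖x‖ := hpm hx
  have h2 : ‖x‖ ≤ ‖q‖ := hqm hx
  constructor <;> linarith

lemma lap_eq_zero_of_notMem_tsupport {n : ℕ} {u : EuclideanSpace ℝ (Fin n) → ℝ}
    {x : EuclideanSpace ℝ (Fin n)} (hx : x ∉ tsupport u) : lap u x = 0 := by
  refine Finset.sum_eq_zero fun i _ => ?_
  have h : u =ᶠ[nhds x] fun _ => 0 := notMem_tsupport_iff_eventuallyEq.1 hx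
  have h' : (fun y => fderiv ℝ u y (EuclideanSpace.single i 1)) =ᶠ[nhds x] fun _ => 0 := by
    filter_upwards [h.eventuallyEq_nhds] with y hy
    simp [hy.fderiv_eq]
  simp [h'.fderiv_eq]

/-- Critical Rellich inequality with remainder term for radial functions on the unit ball. -/
theorem stmt14 (R : ℝ) (hR : 1 ≤ R)
    (u : EuclideanSpace ℝ (Fin 4) → ℝ) (hsmooth : ContDiff ℝ (⊤ : ℕ∞) u)
    (hcpt : HasCompactSupport u)
    (hsupp : tsupport u ⊆ Metric.ball 0 1 \ {0}) (hrad : ∃ g : ℝ → ℝ, ∀ x, u x = g ‖x‖) :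
    (∫ x in Metric.ball (0 : EuclideanSpace ℝ (Fin 4)) 1,
        (u x) ^ 2 / (‖x‖ ^ 4 * (E1 (‖x‖ / R)) ^ 2 * (E2 (‖x‖ / R)) ^ 2)) ≤
      (∫ x in Metric.ball (0 : EuclideanSpace ℝ (Fin 4)) 1, (lap u x) ^ 2) -
        ∫ x in Metric.ball (0 : EuclideanSpace ℝ (Fin 4)) 1,
          (u x) ^ 2 / (‖x‖ ^ 4 * (E1 (‖x‖ / R)) ^ 2) := by
  obtain ⟨a, b, ha, hab, hb, hK⟩ := exists_annulus hcpt hsupp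
  obtain ⟨p, hp⟩ := hrad
  let e : EuclideanSpace ℝ (Fin 4) := EuclideanSpace.single 0 1
  have he : ‖e‖ = 1 := by simp [e]
  -- a radial profile which is smooth on all of `ℝ`
  let g : ℝ → ℝ := fun r => u (r • e)
  have hgs : ContDiff ℝ (⊤ : ℕ∞) g := hsmooth.comp (contDiff_id.smul contDiff_const)
  have hgs1 : ContDiff ℝ (⊤ : ℕ∞) (deriv g) := (contDiff_infty_iff_deriv.1 hgs).2
  have hgs2 : ContDiff ℝ (⊤ : ℕ∞) (deriv (deriv g)) := (contDiff_infty_iff_deriv.1 hgs1).2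
  have hu : ∀ x, u x = g ‖x‖ := fun x => by simp [g, hp, norm_smul, he]
  have hg : ∀ r, HasDerivAt g (deriv g r) r :=
    fun r => (contDiff_infty_iff_deriv.1 hgs).1.differentiableAt.hasDerivAt
  have hg1 : ∀ r, HasDerivAt (deriv g) (deriv (deriv g) r) r :=
    fun r => (contDiff_infty_iff_deriv.1 hgs1).1.differentiableAt.hasDerivAt
  have hz : ∀ r, 0 ≤ r → r ∉ Set.Ioo a b → g =ᶠ[nhds r] fun _ => 0 := by
    intro r hr hr'
    have hx : r • e ∉ tsupport u := fun h => hr' (by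
      simpa [norm_smul, he, abs_of_nonneg hr] using hK _ h)
    exact (notMem_tsupport_iff_eventuallyEq.1 hx).comp_tendsto
      (Continuous.tendsto (f := fun r : ℝ => r • e) (by fun_prop) r)
  have z0 : ∀ r, 0 ≤ r → r ∉ Set.Ioo a b → g r = 0 := fun r h h' => (hz r h h').eq_of_nhds
  have z1 : ∀ r, 0 ≤ r → r ∉ Set.Ioo a b → deriv g r = 0 := fun r h h' => by
    simp [(hz r h h').deriv_eq]
  have z2 : ∀ r, 0 ≤ r → r ∉ Set.Ioo a b → deriv (deriv g) r = 0 := fun r h h' => by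
    simp [(hz r h h').deriv.deriv_eq]
  have hlap : ∀ x, lap u x = deriv (deriv g) ‖x‖ + 3 / ‖x‖ * deriv g ‖x‖ := by
    intro x
    -- at the origin `3 / 0 = 0`, and both sides vanish
    rcases eq_or_ne x 0 with rfl | hx
    · rw [lap_eq_zero_of_notMem_tsupport fun h => (hsupp h).2 rfl, norm_zero,
        z2 0 le_rfl fun h => h.1.not_gt ha]
      simp
    · rw [lap_radial hu hg hg1 hx]
      norm_num
  rw [setIntegral_ball_radial ha hab hb
      (f := fun r => g r ^ 2 / (r ^ 4 * E1 (r / R) ^ 2 * E2 (r / R) ^ 2)),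
    setIntegral_ball_radial ha hab hb
      (f := fun r => (deriv (deriv g) r + 3 / r * deriv g r) ^ 2),
    setIntegral_ball_radial ha hab hb (f := fun r => g r ^ 2 / (r ^ 4 * E1 (r / R) ^ 2)),
    ← mul_sub]
  · have hb0 := ha.le.trans hab
    exact mul_le_mul_of_nonneg_left
      (radial_ineq hR ha hab hb.le hg hg1 hgs2.continuous
        (z0 a ha.le (by simp)) (z0 b hb0 (by simp)) (z1 a ha.le (by simp)) (z1 b hb0 (by simp)))
      (by positivity)
  · intro x; rw [hu]
  · intro r h h'; simp [z0 r h h']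
  · intro x; rw [hlap]
  · intro r h h'; simp [z1 r h h', z2 r h h']
  · intro x; rw [hu]
  · intro r h h'; simp [z0 r h h']
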